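/- For every n ≥ 1 and every t ∈ ℝ, the quantities γ_n(t) = α_{n+1}(t) + β_n(t) satisfy γ_n'(t) = p·( α_n(t)·γ_n(t) − α_{n+1}(t)·γ_{n+1}(t) ) + q·( α_{n+1}(t)/β_n(t) − α_n(t)/β_{n−1}(t) ). -/

import Mathlib

/-!
The `p`-flow and the `q`-flow contribute separately to `γ_n' = α_{n+1}' + β_n'`. In the `p`-part the
products `α_{n+1} β_n` coming from the two lattice equations cancel, and in the `q`-part, once the
factor `β_n` has been cancelled in the equation for `β_n'`, so do the terms `α_{n+1} / β_{n+1}`.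
Both remainders are differences of neighbouring fluxes: `γ_n' = J_n - J_{n+1}` with
`J_n = p α_n γ_n - q α_n / β_{n-1}`.
-/

section ExtendedRelativisticToda

variable {𝕜 K : Type*} [NontriviallyNormedField 𝕜] [NormedField K] [NormedAlgebra 𝕜 K]

/-- The extended relativistic Toda lattice equations with flow weights `p` and `q` hold at time `t`,
and `β` does not vanish there. The equations are imposed only at the sites `n ≥ 1`, where `n - 1` is
not truncated. -/
structure SolvesExtendedRelativisticTodaAt (p q : K) (β α : ℕ → 𝕜 → K) (t : 𝕜) : Prop where
  beta_ne_zero : ∀ n, β n t ≠ 0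
  hasDerivAt_beta : ∀ n, 1 ≤ n → HasDerivAt (β n)
    (p * β n t * (α n t - α (n + 1) t) +
      q * β n t * (α (n + 1) t / (β (n + 1) t * β n t) - α n t / (β n t * β (n - 1) t))) t
  hasDerivAt_alpha : ∀ n, 1 ≤ n → HasDerivAt (α n)
    (p * α n t * (α (n - 1) t + β (n - 1) t - α (n + 1) t - β n t) +
      q * α n t * (1 / β (n - 1) t - 1 / β n t)) t

/-- The combination `γ_n = α_{n+1} + β_n` of the lattice variables, a conserved density. -/
def todaGamma (β α : ℕ → 𝕜 → K) (n : ℕ) (t : 𝕜) : K :=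
  α (n + 1) t + β n t

namespace SolvesExtendedRelativisticTodaAt

variable {p q : K} {β α : ℕ → 𝕜 → K} {t : 𝕜} {n : ℕ}

theorem hasDerivAt_beta_cancelled (h : SolvesExtendedRelativisticTodaAt p q β α t) (hn : 1 ≤ n) :
    HasDerivAt (β n)
      (p * β n t * (α n t - α (n + 1) t) +
        q * (α (n + 1) t / β (n + 1) t - α n t / β (n - 1) t)) t := by
  have hβ : β n t ≠ 0 := h.beta_ne_zero n
  convert h.hasDerivAt_beta n hn using 1
  field_simp

theorem hasDerivAt_alpha_succ (h : SolvesExtendedRelativisticTodaAt p q β α t) (n : ℕ) :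
    HasDerivAt (α (n + 1))
      (p * α (n + 1) t * (α n t + β n t - todaGamma β α (n + 1) t) +
        q * (α (n + 1) t / β n t - α (n + 1) t / β (n + 1) t)) t := by
  convert h.hasDerivAt_alpha (n + 1) n.succ_pos using 1
  simp only [todaGamma, Nat.add_sub_cancel]
  ring

end SolvesExtendedRelativisticTodaAt

theorem stmt_2_general {p q : K} {β α : ℕ → 𝕜 → K} {t : 𝕜} {n : ℕ}
    (h : SolvesExtendedRelativisticTodaAt p q β α t) (hn : 1 ≤ n) :
    HasDerivAt (todaGamma β α n)
      (p * (α n t * todaGamma β α n t - α (n + 1) t * todaGamma β α (n + 1) t) +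
        q * (α (n + 1) t / β n t - α n t / β (n - 1) t)) t := by
  refine ((h.hasDerivAt_alpha_succ n).add (h.hasDerivAt_beta_cancelled hn)).congr_deriv ?_
  simp only [todaGamma]
  ring

end ExtendedRelativisticToda

theorem stmt_2 (p q : ℂ) (β α : ℕ → ℝ → ℂ)
    (hβdiff : ∀ n, Differentiable ℝ (β n))
    (hαdiff : ∀ n, Differentiable ℝ (α n))
    (hβne : ∀ n t, β n t ≠ 0)
    (hβ0 : ∀ t, β 0 t = 1) (hα0 : ∀ t, α 0 t = -1) (hα1 : ∀ t, α 1 t = 0)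
    (hβeq : ∀ n, 1 ≤ n → ∀ t, deriv (β n) t =
      p * β n t * (α n t - α (n + 1) t) +
        q * β n t *
          (α (n + 1) t / (β (n + 1) t * β n t) - α n t / (β n t * β (n - 1) t)))
    (hαeq : ∀ n, 1 ≤ n → ∀ t, deriv (α n) t =
      p * α n t * (α (n - 1) t + β (n - 1) t - α (n + 1) t - β n t) +
        q * α n t * (1 / β (n - 1) t - 1 / β n t)) :
    ∀ n, 1 ≤ n → ∀ t : ℝ,
      deriv (fun s => α (n + 1) s + β n s) t =
        p * (α n t * (α (n + 1) t + β n t) - α (n + 1) t * (α (n + 2) t + β (n + 1) t)) +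
          q * (α (n + 1) t / β n t - α n t / β (n - 1) t) := by
  intro n hn t
  have hsol : SolvesExtendedRelativisticTodaAt p q β α t :=
    { beta_ne_zero := fun m => hβne m t
      hasDerivAt_beta := fun m hm => hβeq m hm t ▸ (hβdiff m t).hasDerivAt
      hasDerivAt_alpha := fun m hm => hαeq m hm t ▸ (hαdiff m t).hasDerivAt }
  exact (stmt_2_general hsol hn).deriv
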